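/- arXiv:2207.08717 — 2 statements merged into one kernel-verified Lean document; each statement's English description precedes it below -/
import Mathlib

section
/- Let X = ℓ_∞ ⊕₁ ℓ₁ (the ℓ¹-sum). Let Z = span{(e₁,0)} where e₁ ∈ ℓ_∞ is the first unit vector. Suppose φ : ℓ_∞ⁿ → X is linear with ‖φ‖ ≤ 1 and ‖(e₁,0) + φ(y)‖ > (1−ε)(1 + ‖y‖) for all y ∈ ℓ_∞ⁿ, where 0 < ε < 1/2. Then, with Q : X → ℓ₁ the canonical projection, for every x ∈ ℓ_∞ⁿ one has (1−2ε)‖x‖ ≤ ‖Q(φ(x))‖ ≤ ‖x‖. -/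
open scoped ENNReal

local notation "ℓinf" => lp (fun _ : ℕ => ℝ) ⊤
local notation "ℓ1" => lp (fun _ : ℕ => ℝ) 1

/-!
If `‖a‖ ≤ 1` in `ℓ_∞`, then for one of the two signs the `0`-th coordinates of `e₁` and `±a` do not
have the same sign, and so `‖e₁ ± a‖ ≤ 1`. Apply this to `φ y = (a, b)` with `‖y‖ = 1`: for that
sign `2 (1 - ε) < ‖(e₁, 0) ± φ y‖ ≤ 1 + ‖b‖`, hence `‖Q (φ y)‖ = ‖b‖ > 1 - 2ε`.
-/

section SupNorm

variable {ι : Type*} [DecidableEq ι]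

lemma norm_single_one_add_le_max_of_nonpos (i : ι) (a : lp (fun _ : ι => ℝ) ⊤) (ha : a i ≤ 0) :
    ‖lp.single ⊤ i (1 : ℝ) + a‖ ≤ max 1 ‖a‖ := by
  refine lp.norm_le_of_forall_le (zero_le_one.trans (le_max_left ..)) fun k => ?_
  have hk : |a k| ≤ max 1 ‖a‖ :=
    (lp.norm_apply_le_norm ENNReal.top_ne_zero a k).trans (le_max_right ..)
  rw [lp.coeFn_add, Pi.add_apply]
  obtain rfl | hki := eq_or_ne k i
  · rw [lp.single_apply_self, Real.norm_eq_abs, abs_le]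
    constructor <;> linarith [neg_le_of_abs_le hk, le_max_left 1 ‖a‖]
  · rwa [lp.single_apply_ne ⊤ i _ hki, zero_add, Real.norm_eq_abs]

lemma min_norm_single_one_add_sub_le_max (i : ι) (a : lp (fun _ : ι => ℝ) ⊤) :
    min ‖lp.single ⊤ i (1 : ℝ) + a‖ ‖lp.single ⊤ i (1 : ℝ) - a‖ ≤ max 1 ‖a‖ := by
  rcases le_total (a i) 0 with ha | ha
  · exact min_le_of_left_le (norm_single_one_add_le_max_of_nonpos i a ha)
  · refine min_le_of_right_le ?_
    rw [sub_eq_add_neg, ← norm_neg a]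
    exact norm_single_one_add_le_max_of_nonpos i (-a) (neg_nonpos.mpr ha)

end SupNorm

lemma min_norm_toLp_add_sub_le {A F : Type*} [SeminormedAddCommGroup A]
    [SeminormedAddCommGroup F] {u : A} (hu : ∀ a : A, ‖a‖ ≤ 1 → min ‖u + a‖ ‖u - a‖ ≤ 1)
    {x : WithLp 1 (A × F)} (hx : ‖x‖ ≤ 1) :
    min ‖WithLp.toLp 1 (u, (0 : F)) + x‖ ‖WithLp.toLp 1 (u, (0 : F)) - x‖ ≤ 1 + ‖x.snd‖ := by
  have hadd : ‖WithLp.toLp 1 (u, (0 : F)) + x‖ = ‖u + x.fst‖ + ‖x.snd‖ := by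
    simp [WithLp.prod_norm_eq_of_L1]
  have hsub : ‖WithLp.toLp 1 (u, (0 : F)) - x‖ = ‖u - x.fst‖ + ‖x.snd‖ := by
    simp [WithLp.prod_norm_eq_of_L1]
  rw [hadd, hsub, min_add_add_right]
  gcongr
  exact hu x.fst ((WithLp.norm_fst_le A x).trans hx)

lemma mul_norm_le_norm_map_of_norm_eq_one {𝕜 E F : Type*} [RCLike 𝕜]
    [SeminormedAddCommGroup E] [SeminormedAddCommGroup F] [NormedSpace 𝕜 E] [NormedSpace 𝕜 F]
    {c : ℝ} (T : E →ₗ[𝕜] F) (hT : ∀ x, ‖x‖ = 1 → c ≤ ‖T x‖) (x : E) : c * ‖x‖ ≤ ‖T x‖ := by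
  obtain hx | hx := (norm_nonneg x).eq_or_lt
  · simp [← hx]
  · have hunit : ‖((‖x‖ : 𝕜)⁻¹) • x‖ = 1 := by simp [norm_smul, hx.ne']
    have hle : c ≤ ‖x‖⁻¹ * ‖T x‖ := by simpa [norm_smul] using hT _ hunit
    rwa [← div_eq_inv_mul, le_div_iff₀ hx] at hle

section LOneSum

variable {E A F : Type*} [SeminormedAddCommGroup E] [SeminormedAddCommGroup A]
  [SeminormedAddCommGroup F] [NormedSpace ℝ E] [NormedSpace ℝ A] [NormedSpace ℝ F]

lemma one_sub_two_mul_le_norm_snd_map {ε : ℝ} {u : A}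
    (hu : ∀ a : A, ‖a‖ ≤ 1 → min ‖u + a‖ ‖u - a‖ ≤ 1) {φ : E →L[ℝ] WithLp 1 (A × F)}
    (hφ : ‖φ‖ ≤ 1)
    (h : ∀ y, (1 - ε) * (1 + ‖y‖) ≤ ‖WithLp.toLp 1 (u, (0 : F)) + φ y‖) {y : E} (hy : ‖y‖ = 1) :
    1 - 2 * ε ≤ ‖(φ y).snd‖ := by
  have hadd : (1 - ε) * (1 + 1) ≤ ‖WithLp.toLp 1 (u, (0 : F)) + φ y‖ := by
    simpa only [hy] using h y
  have hsub : (1 - ε) * (1 + 1) ≤ ‖WithLp.toLp 1 (u, (0 : F)) - φ y‖ := by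
    simpa only [norm_neg, hy, map_neg, ← sub_eq_add_neg] using h (-y)
  have hφy : ‖φ y‖ ≤ 1 := by simpa only [hy, mul_one] using φ.le_of_opNorm_le hφ y
  linarith [(le_min hadd hsub).trans (min_norm_toLp_add_sub_le hu hφy)]

theorem stmt5_general {ε : ℝ} {u : A} (hu : ∀ a : A, ‖a‖ ≤ 1 → min ‖u + a‖ ‖u - a‖ ≤ 1)
    {φ : E →L[ℝ] WithLp 1 (A × F)} (hφ : ‖φ‖ ≤ 1)
    (h : ∀ y, (1 - ε) * (1 + ‖y‖) ≤ ‖WithLp.toLp 1 (u, (0 : F)) + φ y‖) (x : E) :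
    (1 - 2 * ε) * ‖x‖ ≤ ‖(φ x).snd‖ ∧ ‖(φ x).snd‖ ≤ ‖x‖ := by
  constructor
  · exact mul_norm_le_norm_map_of_norm_eq_one (WithLp.sndₗ 1 ℝ A F ∘ₗ (φ : E →ₗ[ℝ] _))
      (fun _ hy => one_sub_two_mul_le_norm_snd_map hu hφ h hy) x
  · calc ‖(φ x).snd‖ ≤ ‖φ x‖ := WithLp.norm_snd_le A _
      _ ≤ 1 * ‖x‖ := φ.le_of_opNorm_le hφ x
      _ = ‖x‖ := one_mul _

end LOneSum

/-- In `X = ℓ_∞ ⊕₁ ℓ₁`, if `φ : ℓ_∞ⁿ → X` has `‖φ‖ ≤ 1` and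
`‖(e₁,0) + φ y‖ > (1-ε)(1+‖y‖)` for all `y`, then the `ℓ₁`-component of `φ`
is bounded below: `(1-2ε)‖x‖ ≤ ‖Q(φ x)‖ ≤ ‖x‖`. -/
theorem stmt5 (n : ℕ) (ε : ℝ) (hε0 : 0 < ε) (hε : ε < 1 / 2)
    (e₁ : ℓinf) (he₁ : ∀ k : ℕ, e₁ k = if k = 0 then 1 else 0)
    (φ : PiLp ⊤ (fun _ : Fin n => ℝ) →L[ℝ] WithLp 1 (ℓinf × ℓ1)) (hφ : ‖φ‖ ≤ 1)
    (h : ∀ y : PiLp ⊤ (fun _ : Fin n => ℝ),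
      (1 - ε) * (1 + ‖y‖) < ‖(WithLp.equiv 1 (ℓinf × ℓ1)).symm (e₁, 0) + φ y‖) :
    ∀ x : PiLp ⊤ (fun _ : Fin n => ℝ),
      (1 - 2 * ε) * ‖x‖ ≤ ‖((WithLp.equiv 1 (ℓinf × ℓ1)) (φ x)).2‖ ∧
      ‖((WithLp.equiv 1 (ℓinf × ℓ1)) (φ x)).2‖ ≤ ‖x‖ := by
  obtain rfl : e₁ = lp.single ⊤ 0 1 := lp.ext (funext fun k => by simp [he₁, Pi.single_apply])
  exact stmt5_general
    (fun a ha => (min_norm_single_one_add_sub_le_max 0 a).trans (max_le le_rfl ha)) hφ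
    (fun y => (h y).le)
end

section
/- Let X be a Banach space and U a free ultrafilter on ℕ. Suppose for every n ∈ ℕ there is T_n : ℓ_∞ⁿ → X with ‖T_n‖ ≤ 1 and ‖z_n + T_n(x)‖ ≥ (1 − 1/n)(1 + ‖x‖) for all x ∈ ℓ_∞ⁿ, where (z_n) is a bounded sequence of unit vectors in X. Then the operator T : (ℓ_∞ⁿ)_U → X_U defined by T((x_n)_U) = (T_n(x_n))_U is well-defined, has ‖T‖ ≤ 1, is an isometry, and satisfies ‖(z_n)_U + T((x_n)_U)‖ = 1 + ‖(x_n)_U‖ for every (x_n)_U. -/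
open scoped ENNReal
open Filter

/-- The subspace `c_{0,U}(ℕ, Xₙ)` of `ℓ_∞(ℕ, Xₙ)`. -/
noncomputable def c0U (X : ℕ → Type*) [∀ n, NormedAddCommGroup (X n)]
    [∀ n, NormedSpace ℝ (X n)] (U : Ultrafilter ℕ) : Submodule ℝ (lp X ⊤) where
  carrier := {f | Tendsto (fun n => ‖f n‖) (U : Filter ℕ) (nhds 0)}
  zero_mem' := by
    simpa using (tendsto_const_nhds : Tendsto (fun _ : ℕ => (0 : ℝ)) (U : Filter ℕ) (nhds 0))
  add_mem' := by
    intro f g hf hg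
    refine squeeze_zero (fun n => norm_nonneg _) (g := fun n => ‖f n‖ + ‖g n‖)
      (fun n => by simpa [lp.coeFn_add] using norm_add_le (f n) (g n)) ?_
    simpa using hf.add hg
  smul_mem' := by
    intro c f hf
    have : Tendsto (fun n => ‖c‖ * ‖f n‖) (U : Filter ℕ) (nhds (‖c‖ * 0)) := hf.const_mul _
    simpa [lp.coeFn_smul, norm_smul] using this

/-!
The quotient norm of `(xₙ)_U` is `lim_U ‖xₙ‖`, so the lower bounds on `‖zₙ + Tₙ x‖` pass to the
limit as `1 + ‖v‖ ≤ ‖(zₙ)_U + T v‖`. Since `‖(zₙ)_U‖ ≤ 1` and `‖T v‖ ≤ ‖v‖`, the triangle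
inequality forces equality in the last bound and in `‖(zₙ)_U + T v‖ ≤ 1 + ‖v‖`.
-/

theorem norm_eq_and_norm_add_eq_of_add_le_norm_add {V : Type*} [SeminormedAddCommGroup V]
    {z w : V} {a b : ℝ} (hz : ‖z‖ ≤ a) (hw : ‖w‖ ≤ b) (h : a + b ≤ ‖z + w‖) :
    ‖w‖ = b ∧ ‖z + w‖ = a + b := by
  have htri := norm_add_le z w
  constructor <;> linarith

theorem tendsto_one_sub_one_div_natCast :
    Tendsto (fun n : ℕ => 1 - 1 / (n : ℝ)) atTop (nhds 1) := by
  simpa only [sub_zero] using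
    tendsto_const_nhds.sub (tendsto_one_div_atTop_nhds_zero_nat (𝕜 := ℝ))

theorem exists_norm_le_of_eventually_norm_le {α : Type*} {E : α → Type*}
    [∀ i, NormedAddCommGroup (E i)] {l : Filter α} [l.NeBot] {f : lp E ⊤} {C : ℝ}
    (h : ∀ᶠ i in l, ‖f i‖ ≤ C) :
    ∃ g : lp E ⊤, ‖g‖ ≤ C ∧ ∀ᶠ i in l, f i = g i := by
  classical
  have hC : 0 ≤ C := h.exists.elim fun i hi => (norm_nonneg (f i)).trans hi
  let g : ∀ i, E i := fun i => if ‖f i‖ ≤ C then f i else 0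
  have hg : ∀ i, ‖g i‖ ≤ C := fun i => by
    dsimp only [g]
    split_ifs with hi
    · exact hi
    · rwa [norm_zero]
  refine ⟨⟨g, memℓp_infty ⟨C, Set.forall_mem_range.2 hg⟩⟩, lp.norm_le_of_forall_le hC hg, ?_⟩
  filter_upwards [h] with i hi
  exact (if_pos hi).symm

theorem norm_mapCLM_apply_le {α 𝕜 : Type*} {E F : α → Type*} [NontriviallyNormedField 𝕜]
    [∀ i, NormedAddCommGroup (E i)] [∀ i, NormedSpace 𝕜 (E i)]
    [∀ i, NormedAddCommGroup (F i)] [∀ i, NormedSpace 𝕜 (F i)]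
    {p : ℝ≥0∞} [Fact (1 ≤ p)] (T : ∀ i, E i →L[𝕜] F i) {K : ℝ} (hK : 0 ≤ K)
    (hT : ∀ i, ‖T i‖ ≤ K) (f : lp E p) (i : α) :
    ‖lp.mapCLM p T hK hT f i‖ ≤ K * ‖f i‖ :=
  (T i).le_of_opNorm_le (hT i) (f i)

section QuotientNorm

variable {E : ℕ → Type*} [∀ n, NormedAddCommGroup (E n)] [∀ n, NormedSpace ℝ (E n)]
  {U : Ultrafilter ℕ}

theorem mem_c0U_iff {f : lp E ⊤} :
    f ∈ c0U E U ↔ Tendsto (fun n => ‖f n‖) (U : Filter ℕ) (nhds 0) :=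
  Iff.rfl

theorem mk_c0U_eq_of_eventuallyEq {f g : lp E ⊤} (h : ∀ᶠ n in (U : Filter ℕ), f n = g n) :
    (Submodule.Quotient.mk f : lp E ⊤ ⧸ c0U E U) = Submodule.Quotient.mk g := by
  rw [Submodule.Quotient.eq, mem_c0U_iff]
  refine tendsto_const_nhds.congr' ?_
  filter_upwards [h] with n hn
  rw [lp.coeFn_sub, Pi.sub_apply, hn, sub_self, norm_zero]

theorem norm_mk_c0U_le_of_eventually_norm_le {f : lp E ⊤} {C : ℝ}
    (h : ∀ᶠ n in (U : Filter ℕ), ‖f n‖ ≤ C) :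
    ‖(Submodule.Quotient.mk f : lp E ⊤ ⧸ c0U E U)‖ ≤ C := by
  obtain ⟨g, hg, hfg⟩ := exists_norm_le_of_eventually_norm_le h
  rw [mk_c0U_eq_of_eventuallyEq hfg]
  exact (Submodule.Quotient.norm_mk_le _ g).trans hg

theorem le_norm_mk_c0U_of_eventually_le_norm {f : lp E ⊤} {C : ℝ}
    (h : ∀ᶠ n in (U : Filter ℕ), C ≤ ‖f n‖) :
    C ≤ ‖(Submodule.Quotient.mk f : lp E ⊤ ⧸ c0U E U)‖ := by
  refine QuotientAddGroup.le_norm_iff.2 fun g hg => ?_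
  have hfg : Tendsto (fun n => ‖g‖ + ‖(f - g) n‖) (U : Filter ℕ) (nhds ‖g‖) := by
    simpa only [add_zero] using
      (mem_c0U_iff.1 ((Submodule.Quotient.eq (c0U E U)).1 hg.symm)).const_add ‖g‖
  refine ge_of_tendsto hfg ?_
  filter_upwards [h] with n hn
  calc
    C ≤ ‖f n‖ := hn
    _ ≤ ‖g n‖ + ‖f n - g n‖ := norm_le_insert' (f n) (g n)
    _ ≤ ‖g‖ + ‖(f - g) n‖ :=
      add_le_add (lp.norm_apply_le_norm ENNReal.top_ne_zero g n) le_rfl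

theorem tendsto_norm_apply_norm_mk_c0U (f : lp E ⊤) :
    Tendsto (fun n => ‖f n‖) (U : Filter ℕ)
      (nhds ‖(Submodule.Quotient.mk f : lp E ⊤ ⧸ c0U E U)‖) := by
  refine tendsto_order.2 ⟨fun a ha => ?_, fun b hb => ?_⟩
  · by_contra hlt
    refine ha.not_ge (norm_mk_c0U_le_of_eventually_norm_le ?_)
    simpa only [not_lt] using Ultrafilter.eventually_not.2 hlt
  · by_contra hlt
    refine hb.not_ge (le_norm_mk_c0U_of_eventually_le_norm ?_)
    simpa only [not_lt] using Ultrafilter.eventually_not.2 hlt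

end QuotientNorm

section UltraproductMap

variable {E F : ℕ → Type*} [∀ n, NormedAddCommGroup (E n)] [∀ n, NormedSpace ℝ (E n)]
  [∀ n, NormedAddCommGroup (F n)] [∀ n, NormedSpace ℝ (F n)]
  (U : Ultrafilter ℕ) (T : ∀ n, E n →L[ℝ] F n) {K : ℝ} (hK : 0 ≤ K) (hT : ∀ n, ‖T n‖ ≤ K)

theorem mapCLM_mem_c0U {f : lp E ⊤} (hf : f ∈ c0U E U) : lp.mapCLM ⊤ T hK hT f ∈ c0U F U := by
  rw [mem_c0U_iff] at hf ⊢
  refine squeeze_zero (fun n => norm_nonneg _) (norm_mapCLM_apply_le T hK hT f) ?_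
  simpa only [mul_zero] using hf.const_mul K

/-- The ultraproduct `(fₙ)_U ↦ (Tₙ fₙ)_U` of a bounded family of operators `(Tₙ)`. -/
noncomputable def ultraproductMap : (lp E ⊤ ⧸ c0U E U) →L[ℝ] (lp F ⊤ ⧸ c0U F U) :=
  (c0U E U).liftQL ((c0U F U).mkQL ∘L lp.mapCLM ⊤ T hK hT) fun _ hf =>
    (Submodule.Quotient.mk_eq_zero _).2 (mapCLM_mem_c0U U T hK hT hf)

theorem ultraproductMap_mk (f : lp E ⊤) :
    ultraproductMap U T hK hT (Submodule.Quotient.mk f) =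
      Submodule.Quotient.mk (lp.mapCLM ⊤ T hK hT f) :=
  rfl

theorem norm_ultraproductMap_apply_le (v : lp E ⊤ ⧸ c0U E U) :
    ‖ultraproductMap U T hK hT v‖ ≤ K * ‖v‖ := by
  obtain ⟨f, rfl⟩ := Submodule.Quotient.mk_surjective _ v
  exact le_of_tendsto_of_tendsto' (tendsto_norm_apply_norm_mk_c0U (lp.mapCLM ⊤ T hK hT f))
    ((tendsto_norm_apply_norm_mk_c0U f).const_mul K) (norm_mapCLM_apply_le T hK hT f)

theorem norm_ultraproductMap_le : ‖ultraproductMap U T hK hT‖ ≤ K :=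
  ContinuousLinearMap.opNorm_le_bound _ hK (norm_ultraproductMap_apply_le U T hK hT)

theorem mul_one_add_norm_le_norm_mk_add_ultraproductMap {c : ℕ → ℝ} {a : ℝ}
    (hc : Tendsto c (U : Filter ℕ) (nhds a)) {z : lp F ⊤}
    (hTz : ∀ᶠ n in (U : Filter ℕ), ∀ x : E n, c n * (1 + ‖x‖) ≤ ‖z n + T n x‖)
    (v : lp E ⊤ ⧸ c0U E U) :
    a * (1 + ‖v‖) ≤
      ‖(Submodule.Quotient.mk z : lp F ⊤ ⧸ c0U F U) + ultraproductMap U T hK hT v‖ := by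
  obtain ⟨f, rfl⟩ := Submodule.Quotient.mk_surjective _ v
  have hlim := hc.mul ((tendsto_norm_apply_norm_mk_c0U (U := U) f).const_add 1)
  rw [ultraproductMap_mk, ← Submodule.Quotient.mk_add]
  exact le_of_tendsto_of_tendsto hlim (tendsto_norm_apply_norm_mk_c0U (z + lp.mapCLM ⊤ T hK hT f))
    (hTz.mono fun n hn => hn (f n))

end UltraproductMap

theorem stmt11_general {E F : ℕ → Type*} [∀ n, NormedAddCommGroup (E n)]
    [∀ n, NormedSpace ℝ (E n)] [∀ n, NormedAddCommGroup (F n)] [∀ n, NormedSpace ℝ (F n)]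
    (U : Ultrafilter ℕ) {c : ℕ → ℝ} (hc : Tendsto c (U : Filter ℕ) (nhds 1))
    {z : lp F ⊤} (hz : ‖z‖ ≤ 1) (T : ∀ n, E n →L[ℝ] F n) (hT : ∀ n, ‖T n‖ ≤ 1)
    (hTz : ∀ᶠ n in (U : Filter ℕ), ∀ x : E n, c n * (1 + ‖x‖) ≤ ‖z n + T n x‖) :
    ∃ Top : (lp E ⊤ ⧸ c0U E U) →L[ℝ] (lp F ⊤ ⧸ c0U F U),
      (∀ (f : lp E ⊤) (g : lp F ⊤), (∀ n, g n = T n (f n)) →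
        Top (Submodule.Quotient.mk f) = Submodule.Quotient.mk g) ∧
      ‖Top‖ ≤ 1 ∧
      (∀ v, ‖Top v‖ = ‖v‖) ∧
      (∀ v, ‖(Submodule.Quotient.mk z : lp F ⊤ ⧸ c0U F U) + Top v‖ = 1 + ‖v‖) := by
  have hz' : ‖(Submodule.Quotient.mk z : lp F ⊤ ⧸ c0U F U)‖ ≤ 1 :=
    (Submodule.Quotient.norm_mk_le _ z).trans hz
  let Top := ultraproductMap U T zero_le_one hT
  have hTop : ∀ v, ‖Top v‖ ≤ ‖v‖ := by
    simpa only [one_mul] using norm_ultraproductMap_apply_le U T zero_le_one hT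
  have hlower : ∀ v, 1 + ‖v‖ ≤ ‖(Submodule.Quotient.mk z : lp F ⊤ ⧸ c0U F U) + Top v‖ := by
    simpa only [one_mul] using
      mul_one_add_norm_le_norm_mk_add_ultraproductMap U T zero_le_one hT hc hTz
  have hsharp := fun v => norm_eq_and_norm_add_eq_of_add_le_norm_add hz' (hTop v) (hlower v)
  refine ⟨Top, fun f g hfg => ?_, norm_ultraproductMap_le U T zero_le_one hT,
    fun v => (hsharp v).1, fun v => (hsharp v).2⟩
  rw [ultraproductMap_mk, lp.ext (funext hfg : ⇑g = ⇑(lp.mapCLM ⊤ T zero_le_one hT f))]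

/-- Given operators `Tₙ : ℓ_∞ⁿ → X` with `‖Tₙ‖ ≤ 1` and `‖zₙ + Tₙ x‖ ≥ (1-1/n)(1+‖x‖)`
for unit vectors `zₙ ∈ X`, the induced operator `T : (ℓ_∞ⁿ)_U → X_U`,
`T (xₙ)_U = (Tₙ xₙ)_U`, is well defined, has norm at most one, is an isometry, and
satisfies `‖(zₙ)_U + T (xₙ)_U‖ = 1 + ‖(xₙ)_U‖`. -/
theorem stmt11 {X : Type*} [NormedAddCommGroup X] [NormedSpace ℝ X] [CompleteSpace X]
    (U : Ultrafilter ℕ) (hU : (U : Filter ℕ) ≤ Filter.cofinite)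
    (z : ℕ → X) (hz : ∀ n, ‖z n‖ = 1)
    (T : ∀ n : ℕ, PiLp ⊤ (fun _ : Fin n => ℝ) →L[ℝ] X)
    (hT : ∀ n, ‖T n‖ ≤ 1)
    (hTz : ∀ n, ∀ x : PiLp ⊤ (fun _ : Fin n => ℝ),
      (1 - 1 / (n : ℝ)) * (1 + ‖x‖) ≤ ‖z n + T n x‖)
    (zseq : lp (fun _ : ℕ => X) ⊤)
    (hzseq : ∀ n, (zseq : ∀ _ : ℕ, X) n = z n) :
    ∃ Top : (lp (fun n : ℕ => PiLp ⊤ (fun _ : Fin n => ℝ)) ⊤ ⧸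
          c0U (fun n : ℕ => PiLp ⊤ (fun _ : Fin n => ℝ)) U) →L[ℝ]
        (lp (fun _ : ℕ => X) ⊤ ⧸ c0U (fun _ : ℕ => X) U),
      (∀ (f : lp (fun n : ℕ => PiLp ⊤ (fun _ : Fin n => ℝ)) ⊤) (g : lp (fun _ : ℕ => X) ⊤),
        (∀ n, (g : ∀ _ : ℕ, X) n = T n (f n)) →
          Top (Submodule.Quotient.mk f) = Submodule.Quotient.mk g) ∧
      ‖Top‖ ≤ 1 ∧
      (∀ v, ‖Top v‖ = ‖v‖) ∧
      (∀ v, ‖(Submodule.Quotient.mk zseq : lp (fun _ : ℕ => X) ⊤ ⧸ c0U (fun _ : ℕ => X) U) +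
        Top v‖ = 1 + ‖v‖) := by
  have hz' : ‖zseq‖ ≤ 1 := lp.norm_le_of_forall_le zero_le_one fun n => by rw [hzseq, hz]
  exact stmt11_general U (tendsto_one_sub_one_div_natCast.mono_left (Nat.cofinite_eq_atTop ▸ hU))
    hz' T hT (.of_forall fun n x => by simpa only [hzseq] using hTz n x)
end
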